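/- Let A be a positive definite Hermitian n×n matrix (n ≥ 2) and let v ∈ ℂⁿ. Then ⟨A⁻¹v, v⟩·|v|² + |v|²·tr(A⁻¹) ≥ (1/(n-1))·(|v|²)^(1+1/n)·(det A)^(-1/n). -/

import Mathlib

open Matrix
open scoped ComplexOrder

/-!
With `B = A⁻¹` and `P = 1 + v v*`, the left-hand side is `|v|² tr (B P)`. The eigenvalues of `B P`
are nonnegative and their product is `det B · det P = (1 + |v|²) / det A`, so AM-GM gives
`tr (B P) ≥ n ((1 + |v|²) / det A) ^ (1 / n)`, which exceeds the required bound because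
`n ≥ 1 / (n - 1)`.
-/

section PosSemidef

variable {ι 𝕜 : Type*} [Fintype ι] [DecidableEq ι] [RCLike 𝕜]

theorem card_mul_det_rpow_le_trace {M : Matrix ι ι 𝕜} (hM : M.PosSemidef) :
    Fintype.card ι * RCLike.re M.det ^ (1 / (Fintype.card ι : ℝ)) ≤ RCLike.re M.trace := by
  have det_eq : RCLike.re M.det = ∏ i, hM.isHermitian.eigenvalues i := by
    rw [hM.isHermitian.det_eq_prod_eigenvalues, ← RCLike.ofReal_prod, RCLike.ofReal_re]
  have trace_eq : RCLike.re M.trace = ∑ i, hM.isHermitian.eigenvalues i := by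
    rw [hM.isHermitian.trace_eq_sum_eigenvalues, ← RCLike.ofReal_sum, RCLike.ofReal_re]
  rcases isEmpty_or_nonempty ι with _ | _
  · simp
  have card_pos : (0 : ℝ) < Fintype.card ι := Nat.cast_pos.2 Fintype.card_pos
  have amgm := Real.geom_mean_le_arith_mean Finset.univ (fun _ ↦ (1 : ℝ)) hM.isHermitian.eigenvalues
    (fun _ _ ↦ zero_le_one) (by simpa using card_pos) fun i _ ↦ hM.eigenvalues_nonneg i
  rw [det_eq, trace_eq, one_div, ← le_div_iff₀' card_pos]
  simpa using amgm

-- `B P` need not be Hermitian, but it has the trace and determinant of `S P Sᴴ`, where `B = Sᴴ S`.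
theorem card_mul_det_mul_rpow_le_trace_mul {B P : Matrix ι ι 𝕜} (hB : B.PosSemidef)
    (hP : P.PosSemidef) :
    Fintype.card ι * RCLike.re (B * P).det ^ (1 / (Fintype.card ι : ℝ)) ≤
      RCLike.re (B * P).trace := by
  obtain ⟨S, rfl⟩ : ∃ S : Matrix ι ι 𝕜, B = Sᴴ * S := by
    open scoped MatrixOrder in
    exact CStarAlgebra.nonneg_iff_eq_star_mul_self.1 hB.nonneg
  have det_eq : (Sᴴ * S * P).det = (S * P * Sᴴ).det := by
    rw [Matrix.mul_assoc, det_mul_comm]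
  have trace_eq : (Sᴴ * S * P).trace = (S * P * Sᴴ).trace := by
    rw [Matrix.mul_assoc, trace_mul_comm]
  rw [det_eq, trace_eq]
  exact card_mul_det_rpow_le_trace (hP.mul_mul_conjTranspose_same S)

theorem det_mul_one_add_vecMulVec_star (B : Matrix ι ι 𝕜) (v : ι → 𝕜) :
    (B * (1 + vecMulVec v (star v))).det = B.det * ((1 + ∑ i, ‖v i‖ ^ 2 : ℝ) : 𝕜) := by
  rw [det_mul, vecMulVec_eq Unit, det_one_add_replicateCol_mul_replicateRow]
  simp [dotProduct, RCLike.conj_mul]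

theorem trace_mul_one_add_vecMulVec {R : Type*} [CommSemiring R] (B : Matrix ι ι R) (u w : ι → R) :
    (B * (1 + vecMulVec u w)).trace = w ⬝ᵥ (B *ᵥ u) + B.trace := by
  rw [mul_add, mul_one, mul_vecMulVec, trace_add, trace_vecMulVec, dotProduct_comm, add_comm]

theorem card_mul_det_mul_one_add_rpow_le_dotProduct_add_trace {B : Matrix ι ι 𝕜}
    (hB : B.PosSemidef) (v : ι → 𝕜) :
    Fintype.card ι * (RCLike.re B.det * (1 + ∑ i, ‖v i‖ ^ 2)) ^ (1 / (Fintype.card ι : ℝ)) ≤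
      RCLike.re (star v ⬝ᵥ (B *ᵥ v)) + RCLike.re B.trace := by
  have hP : (1 + vecMulVec v (star v)).PosSemidef :=
    PosSemidef.one.add (posSemidef_vecMulVec_self_star v)
  have amgm := card_mul_det_mul_rpow_le_trace_mul hB hP
  rwa [det_mul_one_add_vecMulVec_star, RCLike.re_mul_ofReal, trace_mul_one_add_vecMulVec,
    map_add] at amgm

theorem re_det_inv_of_isHermitian {A : Matrix ι ι 𝕜} (hA : A.IsHermitian) :
    RCLike.re A⁻¹.det = (RCLike.re A.det)⁻¹ := by
  have det_real : (RCLike.re A.det : 𝕜) = A.det :=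
    RCLike.conj_eq_iff_re.1 (by rw [starRingEnd_apply, ← det_conjTranspose, hA])
  rw [det_nonsing_inv, Ring.inverse_eq_inv', ← det_real, ← RCLike.ofReal_inv]
  simp only [RCLike.ofReal_re]

theorem inner_inv_add_trace_inv_lower_bound_general {A : Matrix ι ι 𝕜} (hA : A.PosDef)
    (v : ι → 𝕜) :
    Fintype.card ι * (∑ i, ‖v i‖ ^ 2) ^ (1 + 1 / (Fintype.card ι : ℝ))
        * RCLike.re A.det ^ (-(1 / (Fintype.card ι : ℝ))) ≤
      RCLike.re (star v ⬝ᵥ (A⁻¹ *ᵥ v)) * (∑ i, ‖v i‖ ^ 2)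
        + (∑ i, ‖v i‖ ^ 2) * RCLike.re A⁻¹.trace := by
  set s := ∑ i, ‖v i‖ ^ 2
  set d := RCLike.re A.det
  set p := 1 / (Fintype.card ι : ℝ)
  have hs : 0 ≤ s := by positivity
  have hp : 0 ≤ p := by positivity
  have hd : 0 < d := (RCLike.pos_iff.1 hA.det_pos).1
  calc Fintype.card ι * s ^ (1 + p) * d ^ (-p)
      = s * (Fintype.card ι * (d⁻¹ * s) ^ p) := by
        rw [Real.rpow_add_of_nonneg hs zero_le_one hp, Real.rpow_one,
          Real.mul_rpow (inv_nonneg.2 hd.le) hs, Real.inv_rpow hd.le, Real.rpow_neg hd.le]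
        ring
    _ ≤ s * (Fintype.card ι * (RCLike.re A⁻¹.det * (1 + s)) ^ p) := by
        rw [re_det_inv_of_isHermitian hA.isHermitian]
        gcongr
        exact le_add_of_nonneg_left zero_le_one
    _ ≤ s * (RCLike.re (star v ⬝ᵥ (A⁻¹ *ᵥ v)) + RCLike.re A⁻¹.trace) := by
        gcongr
        exact card_mul_det_mul_one_add_rpow_le_dotProduct_add_trace hA.inv.posSemidef v
    _ = RCLike.re (star v ⬝ᵥ (A⁻¹ *ᵥ v)) * s + s * RCLike.re A⁻¹.trace := by ring

end PosSemidef

theorem one_div_sub_one_le_self {x : ℝ} (hx : 2 ≤ x) : 1 / (x - 1) ≤ x := by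
  rw [div_le_iff₀ (by linarith)]
  nlinarith

/-- For a positive definite Hermitian `n × n` matrix `A` (`n ≥ 2`) and `v ∈ ℂⁿ`,
`⟨A⁻¹ v, v⟩ |v|² + |v|² tr(A⁻¹) ≥ (1/(n-1)) (|v|²)^(1+1/n) (det A)^(-1/n)`. -/
theorem inner_inv_add_trace_inv_lower_bound (n : ℕ) (hn : 2 ≤ n)
    (A : Matrix (Fin n) (Fin n) ℂ) (hA : A.IsHermitian) (hApos : A.PosDef)
    (v : Fin n → ℂ) :
    (star v ⬝ᵥ (A⁻¹ *ᵥ v)).re * (∑ i, Complex.normSq (v i))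
      + (∑ i, Complex.normSq (v i)) * ((A⁻¹.trace).re)
    ≥ (1 / (n - 1 : ℝ)) * ((∑ i, Complex.normSq (v i)) ^ ((1 : ℝ) + 1 / n))
        * ((A.det.re) ^ (-(1 / (n : ℝ)))) := by
  have hd : 0 ≤ A.det.re := (Complex.pos_iff.1 hApos.det_pos).1.le
  have hc : 1 / (n - 1 : ℝ) ≤ n := one_div_sub_one_le_self (by exact_mod_cast hn)
  simp only [Complex.normSq_eq_norm_sq]
  calc 1 / (n - 1 : ℝ) * (∑ i, ‖v i‖ ^ 2) ^ (1 + 1 / (n : ℝ)) * A.det.re ^ (-(1 / (n : ℝ)))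
      ≤ n * (∑ i, ‖v i‖ ^ 2) ^ (1 + 1 / (n : ℝ)) * A.det.re ^ (-(1 / (n : ℝ))) := by gcongr
    _ ≤ _ := by simpa using inner_inv_add_trace_inv_lower_bound_general hApos v
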